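/- arXiv:math/0702671 — 2 statements merged into one kernel-verified Lean document; each statement's English description precedes it below -/
import Mathlib

section
/- Let W be a finite group acting on a commutative ring A by ring automorphisms, with |W| invertible in A, and let B = A^W be the subring of W-invariant elements. Let I be an ideal of B and let M be an A-module equipped with a W-action compatible with the W-action on A, i.e., each w ∈ W acts additively on M and w•(a·m) = (w•a)·(w•m) for all w ∈ W, a ∈ A, m ∈ M. Regard M and the invariant subgroup M^W as B-modules. Since every w ∈ W acts B-linearly on M, W acts on the I-adic completion of M (the inverse limit lim_k M/(Iᵏ·M)). Then the map induced by the inclusion M^W ↪ M, from the I-adic completion of the B-module M^W to the W-invariants of the I-adic completion of M, is a bijection (an isomorphism of modules over the I-adic completion of B). -/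
variable (W : Type*) [Group W] [Fintype W]
variable (A : Type*) [CommRing A] [MulSemiringAction W A]

/-- The subring `B = A^W` of `W`-invariant elements of `A`. -/
def fixedSubring : Subring A where
  carrier := {a | ∀ w : W, w • a = a}
  zero_mem' := fun w => smul_zero w
  one_mem' := fun w => smul_one w
  add_mem' := fun ha hb w => by rw [smul_add, ha w, hb w]
  mul_mem' := fun ha hb w => by rw [smul_mul', ha w, hb w]
  neg_mem' := fun ha w => by rw [smul_neg, ha w]

variable {M : Type*} [AddCommGroup M] [Module A M] [DistribMulAction W M]

/-- The `B = A^W`-submodule `M^W` of `W`-invariant elements of an `A`-module `M`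
carrying a compatible `W`-action. -/
def fixedSubmodule
    (compat : ∀ (w : W) (a : A) (m : M), w • (a • m) = (w • a) • (w • m)) :
    Submodule (fixedSubring W A) M where
  carrier := {m | ∀ w : W, w • m = m}
  zero_mem' := fun w => smul_zero w
  add_mem' := fun ha hb w => by rw [smul_add, ha w, hb w]
  smul_mem' := fun b m hm w => by
    show w • ((b : A) • m) = (b : A) • m
    rw [compat w (b : A) m, hm w, (b.2 : ∀ w : W, w • (b : A) = (b : A)) w]

/-- The action of `w ∈ W` on `M` as a `B = A^W`-linear map. -/
def wLinear (compat : ∀ (w : W) (a : A) (m : M), w • (a • m) = (w • a) • (w • m))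
    (w : W) : M →ₗ[fixedSubring W A] M where
  toFun m := w • m
  map_add' := smul_add w
  map_smul' := fun b m => by
    show w • ((b : A) • m) = (b : A) • (w • m)
    rw [compat w (b : A) m, (b.2 : ∀ w : W, w • (b : A) = (b : A)) w]

/-- The inverse of `|W|` in `A`, when it exists, is `W`-invariant. -/
theorem exists_mem_fixedSubring_mul_card_eq_one (hinv : IsUnit (Fintype.card W : A)) :
    ∃ e : fixedSubring W A, (e : A) * (Fintype.card W : A) = 1 := by
  obtain ⟨e, he⟩ := hinv.exists_left_inv
  refine ⟨⟨e, fun w => hinv.mul_right_cancel ?_⟩, he⟩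
  have h := congrArg (w • ·) he
  have hcard : w • (Fintype.card W : A) = (Fintype.card W : A) :=
    map_natCast (MulSemiringAction.toRingHom W A w) _
  simp only [smul_mul', smul_one, hcard] at h
  rw [h, he]

/-- The Reynolds operator `m ↦ e • ∑ w, w • m` from `M` to `M^W`; it is a projection when
`e` is the inverse of `|W|`. -/
def reynolds (compat : ∀ (w : W) (a : A) (m : M), w • (a • m) = (w • a) • (w • m))
    (e : fixedSubring W A) : M →ₗ[fixedSubring W A] fixedSubmodule W A compat :=
  LinearMap.codRestrict _ (e • ∑ w : W, wLinear W A compat w) fun m =>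
    Submodule.smul_mem _ e fun v => by
      rw [LinearMap.sum_apply, Finset.smul_sum]
      exact Fintype.sum_equiv (Equiv.mulLeft v) _ _ fun w => smul_smul v w m

theorem reynolds_comp_subtype
    (compat : ∀ (w : W) (a : A) (m : M), w • (a • m) = (w • a) • (w • m))
    {e : fixedSubring W A} (he : (e : A) * (Fintype.card W : A) = 1) :
    reynolds W A compat e ∘ₗ (fixedSubmodule W A compat).subtype = LinearMap.id := by
  ext m
  have hsum : ∑ w : W, wLinear W A compat w (m : M) = Fintype.card W • (m : M) := by
    rw [Finset.sum_congr rfl fun w _ => show wLinear W A compat w (m : M) = m from m.2 w,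
      Finset.sum_const, Finset.card_univ]
  change (e : A) • ((∑ w : W, wLinear W A compat w) (m : M)) = m
  rw [LinearMap.sum_apply, hsum, ← Nat.cast_smul_eq_nsmul A, smul_smul, he, one_smul]

theorem adicCompletion_map_subtype_comp_reynolds
    (compat : ∀ (w : W) (a : A) (m : M), w • (a • m) = (w • a) • (w • m))
    (e : fixedSubring W A) (I : Ideal (fixedSubring W A)) (x : AdicCompletion I M) :
    AdicCompletion.map I ((fixedSubmodule W A compat).subtype ∘ₗ reynolds W A compat e) x =
      e • ∑ w : W, AdicCompletion.map I (wLinear W A compat w) x := by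
  induction x using AdicCompletion.induction_on with
  | _ a =>
    have hcomp : (fixedSubmodule W A compat).subtype ∘ₗ reynolds W A compat e =
        e • ∑ w : W, wLinear W A compat w := LinearMap.subtype_comp_codRestrict _ _ _
    simp only [hcomp, AdicCompletion.map_mk, ← map_sum, ← map_smul]
    ext n
    simp [AdicCompletion.val_sum_apply, AdicCompletion.val_smul_apply]

/-- Let `W` be a finite group acting on a commutative ring `A` with `|W|` invertible in
`A`, let `B = A^W`, `I ⊆ B` an ideal, and `M` an `A`-module with compatible `W`-action.
Then the map induced by the inclusion `M^W ↪ M`, from the `I`-adic completion of the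
`B`-module `M^W` to the `W`-invariants of the `I`-adic completion of `M`, is a
bijection. -/
theorem bijOn_adicCompletion_invariants
    (hinv : IsUnit ((Fintype.card W : A)))
    (compat : ∀ (w : W) (a : A) (m : M), w • (a • m) = (w • a) • (w • m))
    (I : Ideal (fixedSubring W A)) :
    Set.BijOn
      ⇑(AdicCompletion.map I ((fixedSubmodule W A compat).subtype) :
          AdicCompletion I (fixedSubmodule W A compat) →ₗ[AdicCompletion I (fixedSubring W A)]
            AdicCompletion I M)
      Set.univ
      {x : AdicCompletion I M | ∀ w : W, AdicCompletion.map I (wLinear W A compat w) x = x} := by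
  obtain ⟨e, he⟩ := exists_mem_fixedSubring_mul_card_eq_one W A hinv
  refine ⟨fun y _ w => ?_, Function.Injective.injOn ?_, fun x hx => ?_⟩
  · rw [AdicCompletion.map_comp_apply]
    congr 2
    ext m
    exact m.2 w
  · refine Function.LeftInverse.injective
      (g := AdicCompletion.map I (reynolds W A compat e)) fun y => ?_
    rw [AdicCompletion.map_comp_apply, reynolds_comp_subtype W A compat he,
      AdicCompletion.map_id, LinearMap.id_apply]
  · refine ⟨AdicCompletion.map I (reynolds W A compat e) x, Set.mem_univ _, ?_⟩
    have he' : e * (Fintype.card W : fixedSubring W A) = 1 := Subtype.ext (by simpa using he)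
    rw [AdicCompletion.map_comp_apply, adicCompletion_map_subtype_comp_reynolds,
      Finset.sum_congr rfl fun w _ => hx w, Finset.sum_const, Finset.card_univ,
      ← Nat.cast_smul_eq_nsmul (fixedSubring W A), smul_smul, he', one_smul]
end

section
/- Let W be a finite group acting on a commutative ring A by ring automorphisms, with |W| invertible in A, let B = A^W be the invariant subring, let I be an ideal of B, and let M be an A-module equipped with a W-action compatible with the W-action on A (each w acts additively and w•(a·m) = (w•a)·(w•m)). Regard M and M^W as B-modules. Then for every natural number k, the map induced by the inclusion M^W ↪ M, from the quotient M^W/(Iᵏ·M^W) to the W-invariants (M/(Iᵏ·M))^W of the quotient M/(Iᵏ·M), is a bijection. -/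
variable (W : Type*) [Group W] [Fintype W]
variable (A : Type*) [CommRing A] [MulSemiringAction W A]

variable {M : Type*} [AddCommGroup M] [Module A M] [DistribMulAction W M]

/-- The trace `m ↦ ∑ w, w • m` as a `B = A^W`-linear map from `M` to `M^W`. -/
def traceLinear (compat : ∀ (w : W) (a : A) (m : M), w • (a • m) = (w • a) • (w • m)) :
    M →ₗ[fixedSubring W A] fixedSubmodule W A compat :=
  (∑ w : W, wLinear W A compat w).codRestrict (fixedSubmodule W A compat) fun m v => by
    rw [LinearMap.sum_apply, Finset.smul_sum]
    exact Fintype.sum_equiv (Equiv.mulLeft v) _ _ fun w => (mul_smul v w m).symm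

theorem coe_traceLinear
    (compat : ∀ (w : W) (a : A) (m : M), w • (a • m) = (w • a) • (w • m)) (m : M) :
    (traceLinear W A compat m : M) = ∑ w : W, wLinear W A compat w m :=
  LinearMap.sum_apply _ _ m

theorem traceLinear_coe
    (compat : ∀ (w : W) (a : A) (m : M), w • (a • m) = (w • a) • (w • m))
    (m : fixedSubmodule W A compat) :
    traceLinear W A compat (m : M) = (Fintype.card W : fixedSubring W A) • m := by
  refine Subtype.ext ?_
  have hm : ∀ w : W, wLinear W A compat w m = m := m.2
  rw [coe_traceLinear, Finset.sum_congr rfl fun w _ => hm w, Finset.sum_const,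
    Finset.card_univ, Nat.cast_smul_eq_nsmul]
  rfl

/-- A natural number invertible in `A` is already invertible in the invariant subring. -/
theorem isUnit_natCast_fixedSubring {n : ℕ} (h : IsUnit (n : A)) :
    IsUnit (n : fixedSubring W A) := by
  obtain ⟨u, hu⟩ := h.exists_right_inv
  have hfix : ∀ w : W, w • u = u := fun w => by
    have hw : (n : A) * (w • u) = 1 := by
      have hn : w • (n : A) = n := map_natCast (MulSemiringAction.toRingHom W A w) n
      rw [← smul_one w, ← hu, smul_mul', hn]
    exact h.mul_left_cancel (hw.trans hu.symm)
  exact IsUnit.of_mul_eq_one ⟨u, hfix⟩ (Subtype.ext (by simpa using hu))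

/-- Let `W` be a finite group acting on a commutative ring `A` with `|W|` invertible in
`A`, let `B = A^W`, `I ⊆ B` an ideal, and `M` an `A`-module with compatible `W`-action.
For every `k`, the map induced by the inclusion `M^W ↪ M`, from `M^W/(Iᵏ·M^W)` to the
`W`-invariants of `M/(Iᵏ·M)`, is a bijection. -/
theorem bijOn_quotient_invariants
    (hinv : IsUnit ((Fintype.card W : A)))
    (compat : ∀ (w : W) (a : A) (m : M), w • (a • m) = (w • a) • (w • m))
    (I : Ideal (fixedSubring W A)) (k : ℕ) :
    Set.BijOn
      ⇑(Submodule.mapQ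
          (I ^ k • ⊤ : Submodule (fixedSubring W A) (fixedSubmodule W A compat))
          (I ^ k • ⊤ : Submodule (fixedSubring W A) M)
          (fixedSubmodule W A compat).subtype
          (by
            rw [← Submodule.map_le_iff_le_comap, Submodule.map_smul'']
            exact Submodule.smul_mono le_rfl le_top))
      Set.univ
      {x : M ⧸ (I ^ k • ⊤ : Submodule (fixedSubring W A) M) |
        ∀ w : W,
          Submodule.mapQ
            (I ^ k • ⊤ : Submodule (fixedSubring W A) M)
            (I ^ k • ⊤ : Submodule (fixedSubring W A) M)
            (wLinear W A compat w)
            (by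
              rw [← Submodule.map_le_iff_le_comap, Submodule.map_smul'']
              exact Submodule.smul_mono le_rfl le_top) x = x} := by
  obtain ⟨u, hu⟩ := (isUnit_natCast_fixedSubring W A hinv).exists_left_inv
  refine ⟨?_, ?_, ?_⟩
  · intro x _ w
    obtain ⟨m, rfl⟩ := Submodule.Quotient.mk_surjective _ x
    exact congrArg Submodule.Quotient.mk (m.2 w)
  · refine Function.Injective.injOn (LinearMap.ker_eq_bot.mp (LinearMap.ker_eq_bot'.mpr ?_))
    intro x hx
    obtain ⟨m, rfl⟩ := Submodule.Quotient.mk_surjective _ x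
    have hm : (m : M) ∈ (I ^ k • ⊤ : Submodule (fixedSubring W A) M) :=
      (Submodule.Quotient.mk_eq_zero _).mp hx
    have htr : traceLinear W A compat (m : M) ∈
        (I ^ k • ⊤ : Submodule (fixedSubring W A) (fixedSubmodule W A compat)) := by
      have := Submodule.mem_map_of_mem (f := traceLinear W A compat) hm
      rw [Submodule.map_smul''] at this
      exact Submodule.smul_mono le_rfl le_top this
    rw [traceLinear_coe] at htr
    rw [Submodule.Quotient.mk_eq_zero]
    simpa only [smul_smul, hu, one_smul] using Submodule.smul_mem _ u htr
  · intro x hx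
    obtain ⟨m, rfl⟩ := Submodule.Quotient.mk_surjective _ x
    refine ⟨Submodule.Quotient.mk (u • traceLinear W A compat m), Set.mem_univ _, ?_⟩
    have hx' : ∀ w : W, Submodule.mkQ (I ^ k • ⊤ : Submodule (fixedSubring W A) M)
        (wLinear W A compat w m) = Submodule.mkQ _ m := hx
    change Submodule.mkQ (I ^ k • ⊤ : Submodule (fixedSubring W A) M)
      (u • (traceLinear W A compat m : M)) = Submodule.mkQ _ m
    rw [coe_traceLinear, map_smul, map_sum, Finset.sum_congr rfl fun w _ => hx' w,
      Finset.sum_const, Finset.card_univ, ← Nat.cast_smul_eq_nsmul (fixedSubring W A),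
      smul_smul, hu, one_smul]
end
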